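/- arXiv:1709.09740 — 2 statements merged into one kernel-verified Lean document; each statement's English description precedes it below -/
import Mathlib

section
/- Let k be an algebraically closed field, let a, b ≥ 1 be integers, and let ℓ be an integer with 1 ≤ ℓ ≤ min(a, b). Identify a vector d = (d_0, …, d_{a+b}) ∈ k^{a+b+1} with the (a+1) × (b+1) Hankel matrix whose (i,j) entry is d_{i+j} for 0 ≤ i ≤ a, 0 ≤ j ≤ b. Then the set S_ℓ = { d ∈ k^{a+b+1} : the Hankel matrix of d has rank ≤ ℓ } is Zariski closed in k^{a+b+1} (it is the common zero locus of all (ℓ+1) × (ℓ+1) minors, which are polynomials in the coordinates d_0, …, d_{a+b}), and its dimension is at most 2ℓ; precisely, the Krull dimension of the quotient of the polynomial ring k[x_0, …, x_{a+b}] by the vanishing ideal of S_ℓ is at most 2ℓ. (These sets are the affine cones over the secant varieties of the rational normal curve of degree a+b: the cone over the ℓ-secant variety S_{ℓ-1} has dimension at most 2ℓ.) -/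
/-!
Closedness: `H` has rank at most `ℓ` iff `det (U * H * V) = 0` for all scalar matrices `U`, `V` of
sizes `(ℓ+1) × (a+1)` and `(b+1) × (ℓ+1)` (`rank_le_iff_forall_det`); these determinants are
polynomials in the entries of `H`.

Dimension: put `n = a + b`. If the Hankel matrix of `d` has rank at most `ℓ`, then for some `m ≤ ℓ`
the sequence satisfies a monic linear recurrence
`d_{m+s} = ∑_{t<m} c_t d_{t+s}` for all `0 ≤ s ≤ n - ℓ` (`hankel_recurrence`).
So `d_0, …, d_{m+n-ℓ}` are polynomials in `c_0, …, c_{m-1}, d_0, …, d_{m-1}`, and only `ℓ - m`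
further coordinates remain. Hence the set is contained in the union, over `m ≤ ℓ`, of the images of
polynomial maps `k^{2ℓ} → k^{n+1}` (`hankelHom`), and the vanishing ideal contains the intersection
of the kernels of the comorphisms. The quotient by each kernel embeds in a polynomial ring in `2ℓ`
variables, so by Noether normalization and a comparison of transcendence degrees its Krull
dimension is at most `2ℓ` (`krullDim_quotient_ker_le`); a prime containing a finite intersection of
ideals contains one of them (`krullDim_quotient_le_of_inf_le`).

For the recurrence, let `R_i` be the rows and let `m` be minimal with `R_m` in the span of the
earlier rows. The resulting relation holds for `0 ≤ s ≤ b`. If its first failure, at `s₀ = b + u`,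
came before or at `n - ℓ`, then `R_0, …, R_{m-1}` together with `ℓ - m + 1` rows of the Hankel
matrix of the defect sequence `e_s = d_{m+s} - ∑ c_t d_{t+s}` would be `ℓ + 1` linearly independent
vectors of the row space: the defect rows vanish in the first `m` columns and are anti-triangular
in the last `ℓ - m + 1`.
-/

open MvPolynomial

noncomputable section

/-! ### Dimension bounds for polynomially parametrised sets -/

/-- The scheme-theoretic image of a morphism of affine spaces has dimension at most that of the
source. -/
lemma krullDim_quotient_ker_le {k : Type*} [Field k] {σ τ : Type*} [Finite σ] [Finite τ]
    (φ : MvPolynomial σ k →ₐ[k] MvPolynomial τ k) :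
    ringKrullDim (MvPolynomial σ k ⧸ RingHom.ker φ) ≤ (Nat.card τ : WithBot ℕ∞) := by
  have hp : (RingHom.ker φ).IsPrime := RingHom.ker_isPrime _
  obtain ⟨s, g, hg, hgi⟩ :=
    exists_integral_inj_algHom_of_fg (k := k) (MvPolynomial σ k ⧸ RingHom.ker φ)
  -- The quotient embeds into `MvPolynomial τ k`, which bounds its transcendence degree.
  have hs : s ≤ Nat.card τ := by
    have hinj : Function.Injective ((Ideal.kerLiftAlg φ).comp g) := by
      rw [AlgHom.coe_comp]
      exact (Ideal.kerLiftAlg_injective φ).comp hg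
    have h := lift_trdeg_le_of_injective _ hinj
    simp only [MvPolynomial.trdeg_of_isDomain, Cardinal.mk_fin, Cardinal.lift_lift,
      Cardinal.lift_natCast] at h
    rw [← Nat.cast_card] at h
    simpa using h
  let := g.toRingHom.toAlgebra
  have : Algebra.IsIntegral (MvPolynomial (Fin s) k) (MvPolynomial σ k ⧸ RingHom.ker φ) :=
    ⟨hgi⟩
  have h1 : ringKrullDim (MvPolynomial σ k ⧸ RingHom.ker φ) ≤
      ringKrullDim (MvPolynomial (Fin s) k) := by
    refine Order.krullDim_le_of_strictMono (PrimeSpectrum.comap g.toRingHom) ?_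
    intro p q hpq
    exact Ideal.IsIntegral.comap_lt_comap (R := MvPolynomial (Fin s) k) (I := p.asIdeal)
      (J := q.asIdeal) hpq
  refine h1.trans ?_
  rw [MvPolynomial.ringKrullDim_of_isNoetherianRing]
  simp
  exact_mod_cast hs

/-- The dimension of a finite union of closed sets is at most the maximum of their dimensions: every
chain of primes over `I` lies over the single `J i` contained in its smallest member. -/
lemma krullDim_quotient_le_of_inf_le {R ι : Type*} [CommRing R] (s : Finset ι)
    (J : ι → Ideal R) (I : Ideal R) (hI : s.inf J ≤ I) (N : WithBot ℕ∞)
    (hJ : ∀ i ∈ s, ringKrullDim (R ⧸ J i) ≤ N) : ringKrullDim (R ⧸ I) ≤ N := by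
  rw [ringKrullDim_quotient]
  refine iSup_le fun p => ?_
  have hp : I ≤ p.head.1.asIdeal := p.head.2
  obtain ⟨i, hi, hle⟩ := (Ideal.IsPrime.inf_le' p.head.1.isPrime).1 (hI.trans hp)
  refine le_trans ?_ (hJ i hi)
  rw [ringKrullDim_quotient]
  let q : LTSeries (PrimeSpectrum.zeroLocus (J i : Set R)) :=
    { length := p.length
      toFun := fun t => ⟨(p t).1, hle.trans (show p.head.1.asIdeal ≤ (p t).1.asIdeal from
        LTSeries.head_le p t)⟩
      step := fun t => p.step t }
  exact Order.LTSeries.length_le_krullDim q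

/-! ### Zariski closedness -/

/-- A form of the minor criterion for the rank in which coordinate submatrices are replaced by
arbitrary compressions `U * H * V`. -/
lemma rank_le_iff_forall_det {k : Type*} [Field k] {m n ℓ : ℕ}
    (H : Matrix (Fin m) (Fin n) k) :
    H.rank ≤ ℓ ↔ ∀ (U : Matrix (Fin (ℓ + 1)) (Fin m) k) (V : Matrix (Fin n) (Fin (ℓ + 1)) k),
      (U * H * V).det = 0 := by
  constructor
  · intro h U V
    by_contra hne
    have h1 := Matrix.rank_of_isUnit _ ((Matrix.isUnit_iff_isUnit_det _).2 (isUnit_iff_ne_zero.2 hne))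
    have h2 := (Matrix.rank_mul_le_left (U * H) V).trans (Matrix.rank_mul_le_right U H)
    simp at h1
    omega
  · intro h
    by_contra! hlt
    have hr : ((ℓ + 1 : ℕ) : Cardinal) ≤ Module.rank k (LinearMap.range H.mulVecLin) := by
      rw [← Module.finrank_eq_rank]
      exact_mod_cast hlt
    obtain ⟨f, hf⟩ := Module.le_rank_iff_exists_linearMap.1 hr
    obtain ⟨g, hg⟩ := LinearMap.exists_rightInverse_of_surjective H.mulVecLin.rangeRestrict
      (LinearMap.range_rangeRestrict _)
    obtain ⟨u, hu⟩ := LinearMap.exists_leftInverse_of_injective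
      ((LinearMap.range H.mulVecLin).subtype ∘ₗ f)
      (LinearMap.ker_eq_bot.2 (Subtype.val_injective.comp hf))
    -- `H ∘ g ∘ f` is the injection `f` into the range of `H`, and `u` is a left inverse of it.
    have hcomp : u ∘ₗ (Matrix.toLin' H) ∘ₗ (g ∘ₗ f) = LinearMap.id := by
      rw [← hu]
      congr 1
      ext x : 1
      have := LinearMap.congr_fun hg (f (Pi.single x 1))
      ext j
      have := congrFun (congrArg Subtype.val this) j
      simpa using this
    have := h (LinearMap.toMatrix' u) (LinearMap.toMatrix' (g ∘ₗ f))
    rw [Matrix.mul_assoc] at this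
    have e : LinearMap.toMatrix' u * (H * LinearMap.toMatrix' (g ∘ₗ f)) = 1 := by
      rw [← LinearMap.toMatrix'_id, ← hcomp, LinearMap.toMatrix'_comp, LinearMap.toMatrix'_comp,
        LinearMap.toMatrix'_toLin']
    rw [e] at this
    simp at this

/-- The determinant of `U * H * V`, for a matrix `H` of polynomials and scalar matrices `U`, `V`. -/
def compressionDet {k σ : Type*} [Field k] {m n l : ℕ}
    (H : Matrix (Fin m) (Fin n) (MvPolynomial σ k)) (U : Matrix (Fin l) (Fin m) k)
    (V : Matrix (Fin n) (Fin l) k) : MvPolynomial σ k :=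
  let U' : Matrix (Fin l) (Fin m) (MvPolynomial σ k) := U.map C
  let V' : Matrix (Fin n) (Fin l) (MvPolynomial σ k) := V.map C
  (U' * H * V').det

lemma eval_compressionDet {k σ : Type*} [Field k] {m n l : ℕ} (d : σ → k)
    (H : Matrix (Fin m) (Fin n) (MvPolynomial σ k)) (U : Matrix (Fin l) (Fin m) k)
    (V : Matrix (Fin n) (Fin l) k) :
    eval d (compressionDet H U V) = (U * H.map (eval d) * V).det := by
  rw [compressionDet, RingHom.map_det]
  congr 1
  ext i j
  simp [Matrix.mul_apply]

/-! ### The recurrence satisfied by a Hankel matrix of low rank -/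

/-- A sequence whose Hankel matrix has rank at most `ℓ` satisfies a monic linear recurrence of some
order `m ≤ ℓ`, valid on a range of indices that determines all but `ℓ - m` of the remaining terms
`D m, …, D (a + b)`. The matrix only constrains `D` on indices up to `a + b`, and the recurrence
stays within that range. -/
lemma hankel_recurrence {k : Type*} [Field k] {a b ℓ : ℕ} (hℓa : ℓ ≤ a) (hℓb : ℓ ≤ b)
    (D : ℕ → k)
    (hD : (Matrix.of fun (i : Fin (a + 1)) (j : Fin (b + 1)) => D (i + j)).rank ≤ ℓ) :
    ∃ m ≤ ℓ, ∃ c : ℕ → k, ∀ s, s ≤ a + b - ℓ →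
      D (m + s) = ∑ t ∈ Finset.range m, c t * D (t + s) := by
  classical
  set H : Matrix (Fin (a + 1)) (Fin (b + 1)) k := Matrix.of fun i j => D (i + j) with hH
  let W := Submodule.span k (Set.range H.row)
  let R : ℕ → Fin (b + 1) → k := fun i j => D (i + j)
  have hRW : ∀ i ≤ a, R i ∈ W := fun i hi => Submodule.subset_span ⟨⟨i, by omega⟩, rfl⟩
  have hcard : ∀ {ι : Type} [Fintype ι] (v : ι → Fin (b + 1) → k), (∀ i, v i ∈ W) →
      LinearIndependent k v → Fintype.card ι ≤ ℓ := by
    intro ι _ v hv hli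
    have hli' : LinearIndependent k (fun i => (⟨v i, hv i⟩ : W)) :=
      LinearIndependent.of_comp W.subtype hli
    have := hli'.fintype_card_le_finrank
    rw [Matrix.rank_eq_finrank_span_row] at hD
    exact this.trans hD
  have hex : ∃ m, ¬ LinearIndependent k (fun i : Fin (m + 1) => R i) :=
    ⟨ℓ, fun h => by
      have := hcard (fun i : Fin (ℓ + 1) => R i) (fun i => hRW _ (by omega)) h
      simp at this⟩
  obtain ⟨m, hm, hmin⟩ : ∃ m, ¬ LinearIndependent k (fun i : Fin (m + 1) => R i) ∧
      ∀ m' < m, LinearIndependent k (fun i : Fin (m' + 1) => R i) :=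
    ⟨Nat.find hex, Nat.find_spec hex, fun m' h => not_not.1 (Nat.find_min hex h)⟩
  have hli : LinearIndependent k (fun i : Fin m => R i) := by
    rcases m with _ | m
    · exact linearIndependent_empty_type
    · exact hmin m (by omega)
  have hmℓ : m ≤ ℓ := by
    by_contra! hlt
    have := hcard (fun i : Fin (ℓ + 1) => R i) (fun i => hRW _ (by omega)) (hmin ℓ hlt)
    simp at this
  have hspan : R m ∈ Submodule.span k (Set.range fun i : Fin m => R i) := by
    by_contra hn
    refine hm ?_
    have hsnoc : (fun i : Fin (m + 1) => R i) = Fin.snoc (fun i : Fin m => R i) (R m) := by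
      ext i : 1
      refine Fin.lastCases ?_ (fun i => ?_) i <;> simp
    rw [hsnoc]
    exact linearIndependent_finSnoc.2 ⟨hli, hn⟩
  obtain ⟨c', hc'⟩ := (Submodule.mem_span_range_iff_exists_fun k).1 hspan
  let c : ℕ → k := fun t => if h : t < m then c' ⟨t, h⟩ else 0
  let e : ℕ → k := fun s => D (m + s) - ∑ t ∈ Finset.range m, c t * D (t + s)
  -- `e` measures the failure of the recurrence; it vanishes on the columns of the matrix.
  have he0 : ∀ s ≤ b, e s = 0 := by
    intro s hs
    have := congrFun hc' ⟨s, by omega⟩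
    simp only [Finset.sum_apply, Pi.smul_apply, smul_eq_mul, R] at this
    simp only [e, ← this, Finset.sum_range]
    simp [c]
  refine ⟨m, hmℓ, c, fun s hs => sub_eq_zero.1 (?_ : e s = 0)⟩
  by_contra hne
  have hex2 : ∃ s, e s ≠ 0 := ⟨s, hne⟩
  obtain ⟨s₀, hs₀, hs₀min, hs₀s⟩ : ∃ s₀, e s₀ ≠ 0 ∧ (∀ s' < s₀, e s' = 0) ∧ s₀ ≤ s :=
    ⟨Nat.find hex2, Nat.find_spec hex2, fun s' h => not_not.1 (Nat.find_min hex2 h),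
      Nat.find_min' hex2 hne⟩
  have hbs : b < s₀ := by
    by_contra! h
    exact hs₀ (he0 _ h)
  obtain ⟨u, rfl⟩ : ∃ u, s₀ = b + u := ⟨s₀ - b, by omega⟩
  let E : ℕ → Fin (b + 1) → k := fun i j => e (i + j)
  have hEW : ∀ i, m + i ≤ a → E i ∈ W := by
    intro i hi
    have : E i = R (m + i) - ∑ t ∈ Finset.range m, c t • R (t + i) := by
      ext j
      simp [E, e, R, Finset.sum_apply, add_assoc]
    rw [this]
    refine W.sub_mem (hRW _ hi) (W.sum_mem fun t ht => W.smul_mem _ (hRW _ ?_))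
    have := Finset.mem_range.1 ht
    omega
  -- This family has `ℓ + 1` members, so its linear independence contradicts `hcard`.
  let v : Fin m ⊕ Fin (ℓ - m + 1) → Fin (b + 1) → k :=
    Sum.elim (fun i => R i) (fun i => E (u + i))
  have hvW : ∀ x, v x ∈ W := by
    rintro (i | i)
    · exact hRW _ (by omega)
    · exact hEW _ (by omega)
  have hv : LinearIndependent k v := by
    rw [Fintype.linearIndependent_iff]
    intro g hg
    rw [Fintype.sum_sum_type] at hg
    simp only [v, Sum.elim_inl, Sum.elim_inr] at hg
    have hgj : ∀ j ≤ b, ∑ i : Fin m, g (Sum.inl i) * D (i + j) +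
        ∑ i : Fin (ℓ - m + 1), g (Sum.inr i) * e (u + i + j) = 0 := by
      intro j hj
      have := congrFun hg ⟨j, by omega⟩
      simpa [Finset.sum_apply, R, E] using this
    -- In the columns `j < m` the defect rows vanish, and the recurrence carries the resulting
    -- relation among the first `m` rows over to all columns.
    have hw : ∀ j ≤ b, ∑ i : Fin m, g (Sum.inl i) * D (i + j) = 0 := by
      intro j
      induction j using Nat.strong_induction_on with
      | _ j ih =>
        intro hj
        rcases lt_or_ge j m with hjm | hjm
        · have := hgj j hj
          rwa [Finset.sum_eq_zero (s := (Finset.univ : Finset (Fin (ℓ - m + 1)))), add_zero] at this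
          intro i _
          rw [hs₀min _ (by omega), mul_zero]
        · have hrec : ∀ i : Fin m, D (i + j) =
              ∑ t ∈ Finset.range m, c t * D (i + (j - m + t)) := by
            intro i
            have := sub_eq_zero.1 (he0 (i + (j - m)) (by omega))
            rw [show m + (i + (j - m)) = i + j by omega] at this
            rw [this]
            refine Finset.sum_congr rfl fun t _ => ?_
            congr 2
            omega
          simp_rw [hrec, Finset.mul_sum]
          rw [Finset.sum_comm]
          refine Finset.sum_eq_zero fun t ht => ?_
          have ht := Finset.mem_range.1 ht
          have := ih (j - m + t) (by omega) (by omega)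
          rw [← mul_zero (c t), ← this, Finset.mul_sum]
          exact Finset.sum_congr rfl fun i _ => by ring
    have hα : ∀ i, g (Sum.inl i) = 0 := by
      refine Fintype.linearIndependent_iff.1 hli (fun i => g (Sum.inl i)) ?_
      ext j
      simpa [Finset.sum_apply, R] using hw j (by omega)
    -- Column `b - i` of the defect rows is zero before row `i` and equals `e (b + u) ≠ 0` in row
    -- `i`, so the coefficients vanish one by one starting from the last.
    have hβ : ∀ r, ∀ i : Fin (ℓ - m + 1), ℓ - m - i = r → g (Sum.inr i) = 0 := by
      intro r
      induction r using Nat.strong_induction_on with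
      | _ r ih =>
        intro i hi
        have h := hgj (b - i) (by omega)
        rw [hw _ (by omega), zero_add, Finset.sum_eq_single i] at h
        · rw [show u + i + (b - i) = b + u by omega] at h
          exact (mul_eq_zero.1 h).resolve_right hs₀
        · intro j _ hji
          have hji' : (j : ℕ) ≠ i := fun h => hji (Fin.ext h)
          rcases lt_or_gt_of_ne hji' with h | h
          · rw [hs₀min _ (by omega), mul_zero]
          · rw [ih (ℓ - m - j) (by omega) j rfl, zero_mul]
        · simp
    rintro (i | i)
    · exact hα i
    · exact hβ _ i rfl
  have := hcard v hvW hv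
  simp at this
  omega

/-! ### The parametrisation -/

/-- The sequence obtained from recurrence coefficients `c` and free parameters `x`: the first `m`
terms are `x 0, …, x (m - 1)`, the terms of index `m, …, m + n - ℓ` follow the recurrence of order
`m` with coefficients `c`, and the term of index `s > m + n - ℓ` is `x (s - (n - ℓ) - 1)`, so that
the terms of index at most `n` use precisely `x 0, …, x (ℓ - 1)` when `m ≤ ℓ ≤ n`. -/
def hankelParam {A : Type*} [CommRing A] (n ℓ m : ℕ) (c x : ℕ → A) (s : ℕ) : A :=
  if s < m then x s
  else if s ≤ m + (n - ℓ) then ∑ t : Fin m, c t * hankelParam n ℓ m c x (s - m + t)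
  else x (s - (n - ℓ) - 1)
termination_by s
decreasing_by omega

lemma map_hankelParam {A B : Type*} [CommRing A] [CommRing B] (f : A →+* B) (n ℓ m : ℕ)
    (c x : ℕ → A) (s : ℕ) :
    f (hankelParam n ℓ m c x s) = hankelParam n ℓ m (fun t => f (c t)) (fun t => f (x t)) s := by
  induction s using Nat.strong_induction_on with
  | _ s ih =>
    rw [hankelParam, hankelParam]
    split_ifs with h1 h2
    · rfl
    · rw [map_sum]
      refine Finset.sum_congr rfl fun t _ => ?_
      rw [map_mul, ih _ (by omega)]
    · rfl

/-- Every sequence satisfying the recurrence is recovered by `hankelParam`. -/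
lemma hankelParam_eq {A : Type*} [CommRing A] {n ℓ m : ℕ} {c D : ℕ → A}
    (h : ∀ s, s ≤ n - ℓ → D (m + s) = ∑ t ∈ Finset.range m, c t * D (t + s)) (s : ℕ) :
    hankelParam n ℓ m c (fun i => if i < m then D i else D (i + (n - ℓ) + 1)) s = D s := by
  induction s using Nat.strong_induction_on with
  | _ s ih =>
    rw [hankelParam]
    split_ifs with h1 h2 h3
    · rfl
    · have := h (s - m) (by omega)
      rw [show m + (s - m) = s by omega] at this
      rw [this, Finset.sum_range]
      refine Finset.sum_congr rfl fun t _ => ?_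
      rw [ih _ (by omega), add_comm (s - m)]
    · omega
    · congr 1
      omega

/-- The terms of index at most `n` involve only the first `ℓ` entries of `c` and of `x`. -/
lemma hankelParam_congr {A : Type*} [CommRing A] {n ℓ m : ℕ} {c c' x x' : ℕ → A}
    (hm : m ≤ ℓ) (hn : ℓ ≤ n) (hc : ∀ t < ℓ, c t = c' t) (hx : ∀ t < ℓ, x t = x' t) (s : ℕ)
    (hs : s ≤ n) : hankelParam n ℓ m c x s = hankelParam n ℓ m c' x' s := by
  induction s using Nat.strong_induction_on with
  | _ s ih =>
    rw [hankelParam, hankelParam]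
    split_ifs with h1 h2
    · exact hx _ (by omega)
    · refine Finset.sum_congr rfl fun t _ => ?_
      rw [ih _ (by omega) (by omega), hc _ (by omega)]
    · exact hx _ (by omega)

/-- The comorphism of the polynomial map `k^ℓ × k^ℓ → k^{n+1}` sending `(c, x)` to the first `n + 1`
terms of `hankelParam n ℓ m c x`; the first `Sum` component carries `c`, the second `x`. -/
def hankelHom (k : Type*) [Field k] (n ℓ m : ℕ) :
    MvPolynomial (Fin (n + 1)) k →ₐ[k] MvPolynomial (Fin ℓ ⊕ Fin ℓ) k :=
  aeval fun s => hankelParam n ℓ m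
    (fun t => if h : t < ℓ then X (Sum.inl ⟨t, h⟩) else 0)
    (fun t => if h : t < ℓ then X (Sum.inr ⟨t, h⟩) else 0) s

lemma eval_eq_zero_of_mem_ker {k : Type*} [Field k] {n ℓ m : ℕ} (hm : m ≤ ℓ) (hn : ℓ ≤ n)
    {c D : ℕ → k}
    (h : ∀ s, s ≤ n - ℓ → D (m + s) = ∑ t ∈ Finset.range m, c t * D (t + s))
    {f : MvPolynomial (Fin (n + 1)) k} (hf : f ∈ RingHom.ker (hankelHom k n ℓ m)) :
    eval (fun s : Fin (n + 1) => D s) f = 0 := by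
  let x : ℕ → k := fun i => if i < m then D i else D (i + (n - ℓ) + 1)
  let θ : Fin ℓ ⊕ Fin ℓ → k := Sum.elim (fun t => c t) (fun t => x t)
  have key : ((eval θ).comp (hankelHom k n ℓ m).toRingHom) =
      eval (fun s : Fin (n + 1) => D s) := by
    refine MvPolynomial.ringHom_ext (fun r => ?_) (fun s => ?_)
    · simp [hankelHom]
    · simp only [hankelHom, AlgHom.toRingHom_eq_coe, RingHom.comp_apply, RingHom.coe_coe,
        aeval_X, eval_X]
      rw [map_hankelParam, ← hankelParam_eq h s]
      refine hankelParam_congr hm hn (fun t ht => ?_) (fun t ht => ?_) _ (by omega)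
      · simp [ht, θ]
      · simp [ht, θ, x]
  rw [← key]
  have hf' : hankelHom k n ℓ m f = 0 := hf
  simp [hf']

/-- Over an algebraically closed field `k`, with `a, b ≥ 1` and
`1 ≤ ℓ ≤ min(a,b)`, the set `S_ℓ` of vectors `d ∈ k^{a+b+1}` whose associated
`(a+1) × (b+1)` Hankel matrix (with `(i,j)` entry `d_{i+j}`) has rank at most `ℓ`
is Zariski closed (it is the common zero locus of a set of polynomials in the
coordinates), and its dimension is at most `2ℓ`: the Krull dimension of the
quotient of the polynomial ring `k[x_0, …, x_{a+b}]` by the vanishing ideal of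
`S_ℓ` is at most `2ℓ`. -/
theorem stmt3 {k : Type*} [Field k] [IsAlgClosed k]
    (a b ℓ : ℕ) (ha : 1 ≤ a) (hb : 1 ≤ b) (hℓ : 1 ≤ ℓ) (hℓa : ℓ ≤ a) (hℓb : ℓ ≤ b)
    (S : Set (Fin (a + b + 1) → k))
    (hS : S = {d | (Matrix.of fun (i : Fin (a + 1)) (j : Fin (b + 1)) =>
      d ⟨(i : ℕ) + (j : ℕ), by have hi := i.isLt; have hj := j.isLt; omega⟩).rank ≤ ℓ})
    (I : Ideal (MvPolynomial (Fin (a + b + 1)) k))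
    (hI : ∀ f, f ∈ I ↔ ∀ d ∈ S, MvPolynomial.eval d f = 0) :
    (∃ P : Set (MvPolynomial (Fin (a + b + 1)) k),
        S = {d | ∀ f ∈ P, MvPolynomial.eval d f = 0}) ∧
      ringKrullDim (MvPolynomial (Fin (a + b + 1)) k ⧸ I) ≤ ((2 * ℓ : ℕ) : WithBot ℕ∞) := by
  constructor
  · let HX : Matrix (Fin (a + 1)) (Fin (b + 1)) (MvPolynomial (Fin (a + b + 1)) k) :=
      Matrix.of fun i j => X ⟨(i : ℕ) + (j : ℕ), by have hi := i.isLt; have hj := j.isLt; omega⟩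
    refine ⟨{f | ∃ (U : Matrix (Fin (ℓ + 1)) (Fin (a + 1)) k)
      (V : Matrix (Fin (b + 1)) (Fin (ℓ + 1)) k), f = compressionDet HX U V}, ?_⟩
    rw [hS]
    ext d
    simp only [Set.mem_ofPred_eq]
    rw [rank_le_iff_forall_det]
    have hev : ∀ (U : Matrix (Fin (ℓ + 1)) (Fin (a + 1)) k)
        (V : Matrix (Fin (b + 1)) (Fin (ℓ + 1)) k),
        eval d (compressionDet HX U V) = (U * (Matrix.of fun (i : Fin (a + 1))
          (j : Fin (b + 1)) => d ⟨(i : ℕ) + (j : ℕ), by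
            have hi := i.isLt; have hj := j.isLt; omega⟩) * V).det := by
      intro U V
      rw [eval_compressionDet]
      congr 3
      ext i j
      simp [HX]
    constructor
    · rintro h f ⟨U, V, rfl⟩
      rw [hev, h]
    · intro h U V
      rw [← hev]
      exact h _ ⟨U, V, rfl⟩
  · refine krullDim_quotient_le_of_inf_le (Finset.range (ℓ + 1))
      (fun m => RingHom.ker (hankelHom k (a + b) ℓ m)) I ?_ _ ?_
    · intro f hf
      rw [hI]
      intro d hd
      rw [hS] at hd
      let D : ℕ → k := fun s => if h : s < a + b + 1 then d ⟨s, h⟩ else 0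
      have hdD : d = fun s : Fin (a + b + 1) => D s := by
        ext s
        simp only [D, dif_pos s.isLt]
      have hrank : (Matrix.of fun (i : Fin (a + 1)) (j : Fin (b + 1)) => D (i + j)).rank ≤ ℓ := by
        have hd' : Matrix.rank _ ≤ ℓ := hd
        convert! hd' using 2
        ext i j
        simp only [D, Matrix.of_apply]
        rw [dif_pos]
      obtain ⟨m, hm, c, hc⟩ := hankel_recurrence hℓa hℓb D hrank
      rw [hdD]
      have hle := Finset.inf_le (f := fun m => RingHom.ker (hankelHom k (a + b) ℓ m))
        (Finset.mem_range.2 (Nat.lt_succ_of_le hm))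
      exact eval_eq_zero_of_mem_ker hm (by omega) hc (hle hf)
    · intro m _
      refine (krullDim_quotient_ker_le _).trans ?_
      simp [two_mul]
end
end

section
/- Let k be an algebraically closed field of characteristic zero, and let n, d be integers with n ≥ 4 and 3 ≤ d ≤ n − 1. Let W_m denote the k-vector space of homogeneous polynomials of degree m in two variables s, t. Consider tuples (G, F_3, …, F_n) with G ∈ W_{2d−4} and F_i ∈ W_{2d−2} for 3 ≤ i ≤ n, and let Z ⊆ W_{2d−4} × (W_{2d−2})^{n−2} be the set of tuples for which the k-linear map W_3 × W_1^{n−2} → W_{2d−1} given by (A, L_3, …, L_n) ↦ A·G + L_3·F_3 + ⋯ + L_n·F_n is NOT surjective. Then Z is Zariski closed in the affine space W_{2d−4} × (W_{2d−2})^{n−2} and has codimension at least 2: identifying W_{2d−4} × (W_{2d−2})^{n−2} with k^M where M = (2d−3) + (n−2)(2d−1), the Krull dimension of the quotient of the polynomial ring in M variables over k by the vanishing ideal of Z is at most M − 2. -/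
/-!
Write `T z : (A, L) ↦ A * G + ∑ L i * F i` for the map attached to `z = (G, F)`. It depends linearly
on `z`, and `T z` is surjective exactly when `det (T z ∘ B) ≠ 0` for some linear map `B` in the
opposite direction (take for `B` a right inverse). So `Z` is the common zero locus of the
polynomials `z ↦ det (T z ∘ B)`, and every one of them lies in the vanishing ideal `I` of `Z`.

For the codimension it is enough that no prime element `f` divides all elements of `I`: a chain of
primes above `I` can then be prolonged downwards by `(f)` and `0`, where `f` is a prime element of
its smallest member (`ringKrullDim_quotient_le_of_forall_prime`). If `f` did divide all of `I`, then
`f` could vanish only on `Z`, which is excluded as follows (`not_prime_of_zeros`).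

* A polynomial without zeros on a line is constant on it. For each `i` there is a tuple with
  `F i = 0` and `T` surjective, so for generic `(G, F)` surjectivity persists whatever `F i` is
  replaced by, and `f` is constant in the direction of `F i`. By density this holds everywhere, hence
  `f (G, F) = f (G, 0)`.
* For every `G ≠ 0` there is an `F` with `T (G, F)` surjective, so `f (G, 0) ≠ 0`. Thus `G = 0` is the
  only zero of `f (·, 0)`, which is impossible since the space of forms `G` has dimension at least two.

Both existence statements use monomials `F i`: if `s ^ r` is the exact power of `s` dividing `G`, the
products of `G` with the monomials of degree `3` have leading exponents `r, …, r + 3`, and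
`s ^ c * t ^ (2 * d - 2 - c)` contributes the exponents `c` and `c + 1`. A subspace of forms that
realises every leading exponent is everything (`eq_top_of_hasOrd`).
-/

open MvPolynomial

noncomputable section

/-- Multiplication of binary forms: the product of a form of degree `m` and a
form of degree `n` is a form of degree `p = m + n`. -/
def mulForm {k : Type*} [Field k] {m n p : ℕ} (h : m + n = p)
    (f : homogeneousSubmodule (Fin 2) k m) (g : homogeneousSubmodule (Fin 2) k n) :
    homogeneousSubmodule (Fin 2) k p :=
  ⟨(f : MvPolynomial (Fin 2) k) * (g : MvPolynomial (Fin 2) k), by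
    rw [mem_homogeneousSubmodule]
    exact h ▸ MvPolynomial.IsHomogeneous.mul f.2 g.2⟩

/-! ### Krull dimension of quotients of polynomial rings -/

/-- An ideal of a polynomial ring whose elements have no common prime factor has codimension at
least two. -/
lemma ringKrullDim_quotient_le_of_forall_prime {k : Type*} [Field k] {M : ℕ} (hM : 2 ≤ M)
    (I : Ideal (MvPolynomial (Fin M) k))
    (hI : ∀ f : MvPolynomial (Fin M) k, Prime f → ∃ g ∈ I, ¬ f ∣ g) :
    ringKrullDim (MvPolynomial (Fin M) k ⧸ I) ≤ ((M - 2 : ℕ) : WithBot ℕ∞) := by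
  have hdim : Order.krullDim (PrimeSpectrum (MvPolynomial (Fin M) k)) = (M : WithBot ℕ∞) := by
    have := MvPolynomial.ringKrullDim_of_isNoetherianRing (R := k) (ι := Fin M)
    rw [ringKrullDim_eq_zero_of_field] at this
    simpa [ringKrullDim] using this
  rw [ringKrullDim_quotient]
  -- A chain `l` of primes containing `I` is prolonged to the chain `0 < (f) < l 0 < ⋯`.
  refine iSup_le fun l => ?_
  let l' : LTSeries (PrimeSpectrum (MvPolynomial (Fin M) k)) := l.map Subtype.val (fun _ _ h => h)
  have hp : I ≤ l'.head.asIdeal := l.head.2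
  have hp0 : l'.head.asIdeal ≠ ⊥ := by
    intro h
    obtain ⟨g, hg, hg'⟩ := hI (X ⟨0, by omega⟩) (MvPolynomial.X_prime)
    have : g ∈ l'.head.asIdeal := hp hg
    rw [h, Ideal.mem_bot] at this
    exact hg' (this ▸ dvd_zero _)
  obtain ⟨f, hf, hfp⟩ := l'.head.isPrime.exists_mem_prime_of_ne_bot hp0
  obtain ⟨g, hg, hfg⟩ := hI f hfp
  let q : PrimeSpectrum (MvPolynomial (Fin M) k) :=
    ⟨Ideal.span {f}, (Ideal.span_singleton_prime hfp.ne_zero).2 hfp⟩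
  have hq : q < l'.head := by
    refine lt_of_le_of_ne ?_ ?_
    · change Ideal.span {f} ≤ _
      rwa [Ideal.span_singleton_le_iff_mem]
    · intro h
      have : g ∈ q.asIdeal := h ▸ hp hg
      exact hfg (Ideal.mem_span_singleton.1 this)
  have hb : (⊥ : PrimeSpectrum (MvPolynomial (Fin M) k)) < q := by
    refine bot_lt_iff_ne_bot.2 fun h => hfp.ne_zero ?_
    have : f ∈ q.asIdeal := Ideal.mem_span_singleton_self f
    rw [h] at this
    simpa using this
  let s := (l'.cons q hq).cons ⊥ (by simpa using hb)
  have hs : ((s.length : ℕ) : WithBot ℕ∞) ≤ M := hdim ▸ Order.LTSeries.length_le_krullDim s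
  have hs' : s.length = l.length + 1 + 1 := by
    simp only [s, RelSeries.cons_length]
    rfl
  have : l.length + 2 ≤ M := by
    rw [hs'] at hs
    exact_mod_cast hs
  exact_mod_cast (by omega : l.length ≤ M - 2)

/-! ### Polynomials on lines -/

lemma exists_eval_line {k : Type*} [Field k] {M : ℕ} (f : MvPolynomial (Fin M) k)
    (x v : Fin M → k) : ∃ p : Polynomial k, ∀ c : k, eval (x + c • v) f = p.eval c := by
  refine ⟨aeval (fun i => Polynomial.C (x i) + Polynomial.X * Polynomial.C (v i)) f, fun c => ?_⟩
  rw [← Polynomial.coe_evalRingHom, MvPolynomial.aeval_def, MvPolynomial.hom_eval₂]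
  rw [MvPolynomial.eval, MvPolynomial.coe_eval₂Hom]
  congr 1
  · ext; simp
  · ext i; simp [mul_comm (c : k)]

lemma eval_line_const {k : Type*} [Field k] [IsAlgClosed k] {M : ℕ} (f : MvPolynomial (Fin M) k)
    (x v : Fin M → k) (h : ∀ c : k, eval (x + c • v) f ≠ 0) : eval (x + v) f = eval x f := by
  obtain ⟨p, hp⟩ := exists_eval_line f x v
  have hdeg : p.degree = 0 := by
    by_contra hne
    obtain ⟨c, hc⟩ := IsAlgClosed.exists_root p hne
    exact h c (by rw [hp]; exact hc)
  have h1 := hp 1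
  have h0 := hp 0
  rw [Polynomial.eq_C_of_degree_eq_zero hdeg] at h0 h1
  simp only [one_smul, zero_smul, add_zero, Polynomial.eval_C] at h0 h1
  rw [h0, h1]

/-- Two parametrised lines along which `f` takes equal values at all nonzero parameters also give
equal values at parameter zero. -/
lemma eval_line_of_ne_zero {k : Type*} [Field k] [Infinite k] {M : ℕ}
    (f : MvPolynomial (Fin M) k) (x v y w : Fin M → k)
    (h : ∀ c : k, c ≠ 0 → eval (x + c • v) f = eval (y + c • w) f) :
    eval x f = eval y f := by
  obtain ⟨p, hp⟩ := exists_eval_line f x v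
  obtain ⟨q, hq⟩ := exists_eval_line f y w
  have : p = q := by
    refine Polynomial.eq_of_infinite_eval_eq _ _ ?_
    refine Set.Infinite.mono (s := {0}ᶜ) ?_ (Set.finite_singleton (0 : k)).infinite_compl
    intro c hc
    change p.eval c = q.eval c
    rw [← hp, ← hq, h c hc]
  have h0 := hp 0
  have h1 := hq 0
  simp only [zero_smul, add_zero] at h0 h1
  rw [h0, h1, this]

/-- Invariance of `f` under translation by `v` need only be checked on the dense set `D ≠ 0`. -/
lemma eval_add_eq_of_dense {k : Type*} [Field k] [Infinite k] {M : ℕ}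
    (f D : MvPolynomial (Fin M) k) (hD : D ≠ 0) (v : Fin M → k)
    (h : ∀ x, eval x D ≠ 0 → eval (x + v) f = eval x f) (x : Fin M → k) :
    eval (x + v) f = eval x f := by
  let g : MvPolynomial (Fin M) k := aeval (fun i => X i + C (v i)) f
  have hg : ∀ x, eval x g = eval (x + v) f := fun x => by
    simp only [g]
    rw [MvPolynomial.aeval_def, MvPolynomial.hom_eval₂]
    rw [MvPolynomial.eval, MvPolynomial.coe_eval₂Hom]
    congr 1
    · ext; simp
    · ext i; simp
  have : (g - f) * D = 0 := by
    refine MvPolynomial.funext fun x => ?_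
    by_cases hx : eval x D = 0
    · simp [hx]
    · simp [hg, h x hx]
  rcases mul_eq_zero.1 this with h1 | h1
  · rw [← hg, sub_eq_zero.1 h1]
  · exact absurd h1 hD

/-- Without zeros, `f` would be constant along every line through the origin, hence a unit. -/
lemma exists_eval_eq_zero {k : Type*} [Field k] [IsAlgClosed k] {M : ℕ}
    (f : MvPolynomial (Fin M) k) (hf : Prime f) : ∃ x, eval x f = 0 := by
  by_contra! h
  have : f = C (eval 0 f) := by
    refine MvPolynomial.funext fun x => ?_
    rw [eval_C]
    simpa using eval_line_const f 0 x (fun c => h _)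
  refine hf.not_isUnit ?_
  rw [this]
  exact (IsUnit.mk0 _ (h 0)).map C

/-- The determinant of an endomorphism depending linearly on a point is a polynomial in its
coordinates. -/
lemma exists_poly_det {k W : Type*} [Field k] [AddCommGroup W] [Module k W]
    [FiniteDimensional k W] {M : ℕ} (Φ : (Fin M → k) →ₗ[k] (W →ₗ[k] W)) :
    ∃ D : MvPolynomial (Fin M) k, ∀ x, eval x D = LinearMap.det (Φ x) := by
  let b := Module.finBasis k W
  let A : Matrix _ _ (MvPolynomial (Fin M) k) := ∑ m : Fin M,
    (X m : MvPolynomial (Fin M) k) •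
      (LinearMap.toMatrix b b (Φ (Pi.single m 1))).map (C : k →+* MvPolynomial (Fin M) k)
  refine ⟨A.det, fun x => ?_⟩
  rw [← LinearMap.det_toMatrix b, RingHom.map_det]
  congr 1
  have hx : x = ∑ m, x m • Pi.single m (1 : k) := by
    ext i; simp [Finset.sum_apply, Pi.single_apply]
  conv_rhs => rw [hx]
  ext i j
  simp [A, Matrix.sum_apply, map_sum]


/-! ### Binary forms and their leading exponents -/

/-- The space of binary forms of degree `m` in `s = X 0` and `t = X 1`. -/
abbrev Form (k : Type*) [Field k] (m : ℕ) := homogeneousSubmodule (Fin 2) k m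

/-- The exponent vector of `s ^ i * t ^ j`. -/
def expo (i j : ℕ) : Fin 2 →₀ ℕ := Finsupp.single 0 i + Finsupp.single 1 j

/-- The coefficient of `s ^ j * t ^ (m - j)` in a form of degree `m`; meaningful for `j ≤ m` only,
as the subtraction is truncated. -/
def cf {k : Type*} [Field k] {m : ℕ} (j : ℕ) (w : Form k m) : k :=
  coeff (expo j (m - j)) (w : MvPolynomial (Fin 2) k)

lemma eq_zero_of_cf {k : Type*} [Field k] {m : ℕ} (w : Form k m)
    (h : ∀ j ≤ m, cf j w = 0) : w = 0 := by
  refine Subtype.ext (MvPolynomial.ext _ _ fun e => ?_)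
  rw [ZeroMemClass.coe_zero, coeff_zero]
  by_cases he : e.degree = m
  · have h2 : e 0 + e 1 = m := by
      rw [← he, Finsupp.degree_eq_sum, Fin.sum_univ_two]
    have h3 : e = expo (e 0) (m - e 0) := by
      ext i
      fin_cases i
      · simp [expo]
      · simp [expo]; omega
    rw [h3]
    exact h (e 0) (by omega)
  · exact (mem_homogeneousSubmodule _ _).1 w.2 |>.coeff_eq_zero he

/-- The form `w` is nonzero and `s ^ a` is the exact power of `s` dividing it. -/
def HasOrd {k : Type*} [Field k] {m : ℕ} (w : Form k m) (a : ℕ) : Prop :=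
  a ≤ m ∧ cf a w ≠ 0 ∧ ∀ j < a, cf j w = 0

lemma exists_hasOrd {k : Type*} [Field k] {m : ℕ} (w : Form k m) (hw : w ≠ 0) :
    ∃ a, HasOrd w a := by
  classical
  have h : ∃ j, j ≤ m ∧ cf j w ≠ 0 := by
    by_contra! h
    exact hw (eq_zero_of_cf w h)
  exact ⟨Nat.find h, (Nat.find_spec h).1, (Nat.find_spec h).2, fun j hj => by
    have := Nat.find_min h hj
    have h1 := (Nat.find_spec h).1
    by_contra h2
    exact this ⟨by omega, h2⟩⟩

/-- Triangular elimination: a space of forms realising all exponents `l ≤ m` is the whole space. -/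
lemma eq_top_of_hasOrd {k : Type*} [Field k] {m : ℕ} (U : Submodule k (Form k m))
    (h : ∀ l ≤ m, ∃ u ∈ U, HasOrd u l) : U = ⊤ := by
  have key : ∀ r ≤ m + 1, ∀ w : Form k m, (∀ j < m + 1 - r, cf j w = 0) → w ∈ U := by
    intro r
    induction r with
    | zero =>
      intro _ w hw
      rw [eq_zero_of_cf w fun j hj => hw j (by omega)]
      exact U.zero_mem
    | succ r ih =>
      intro hr w hw
      obtain ⟨u, hu, -, hu0, hul⟩ := h (m + 1 - (r + 1)) (by omega)
      set l := m + 1 - (r + 1) with hl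
      have h1 : w - (cf l w / cf l u) • u ∈ U := by
        refine ih (by omega) _ fun j hj => ?_
        have h2 : cf j (w - (cf l w / cf l u) • u) = cf j w - (cf l w / cf l u) * cf j u := by
          simp [cf]
        rw [h2]
        rcases Nat.lt_or_ge j l with h3 | h3
        · rw [hw j h3, hul j h3]; simp
        · have : j = l := by omega
          subst this
          field_simp
          simp
      have := U.add_mem h1 (U.smul_mem (cf l w / cf l u) hu)
      simpa using this
  exact eq_top_iff.2 fun w _ => key (m + 1) le_rfl w (by simp)

/-- The monomial `s ^ j * t ^ (m - j)` as a form of degree `m`. -/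
def monoForm (k : Type*) [Field k] (m j : ℕ) (hj : j ≤ m) : Form k m :=
  ⟨monomial (expo j (m - j)) 1, by
    rw [mem_homogeneousSubmodule]
    refine isHomogeneous_monomial _ ?_
    rw [Finsupp.degree_eq_sum, Fin.sum_univ_two]
    simp [expo]; omega⟩

lemma expo_inj {i j i' j' : ℕ} (h : expo i j = expo i' j') : i = i' ∧ j = j' := by
  refine ⟨by simpa [expo] using DFunLike.congr_fun h 0, by simpa [expo] using DFunLike.congr_fun h 1⟩

lemma hasOrd_monoForm (k : Type*) [Field k] (m j : ℕ) (hj : j ≤ m) :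
    HasOrd (monoForm k m j hj) j := by
  refine ⟨hj, by simp [cf, monoForm], fun i hi => ?_⟩
  simp only [cf, monoForm, coeff_monomial]
  rw [if_neg]
  intro h
  exact hi.ne' (expo_inj h).1

lemma HasOrd.mul {k : Type*} [Field k] {p q m : ℕ} (h : p + q = m) {g : Form k q} {a i : ℕ}
    (hg : HasOrd g a) (hi : i ≤ p) : HasOrd (mulForm h (monoForm k p i hi) g) (i + a) := by
  obtain ⟨ha, h0, hl⟩ := hg
  refine ⟨by omega, ?_, fun j hj => ?_⟩
  · have : expo (i + a) (m - (i + a)) = expo i (p - i) + expo a (q - a) := by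
      ext x
      fin_cases x
      · simp [expo]
      · simp [expo]; omega
    simp only [cf, mulForm, monoForm]
    rw [this, coeff_monomial_mul, one_mul]
    exact h0
  · simp only [cf, mulForm, monoForm]
    rw [coeff_monomial_mul']
    split_ifs with hle
    · have h1 : i ≤ j := by simpa [expo] using hle 0
      have h2 : p - i ≤ m - j := by simpa [expo] using hle 1
      have : expo j (m - j) - expo i (p - i) = expo (j - i) (q - (j - i)) := by
        ext x
        fin_cases x
        · simp [expo]
        · simp [expo]; omega
      rw [this, one_mul]
      exact hl (j - i) (by omega)
    · rfl

instance finiteDimensional_form (k : Type*) [Field k] (m : ℕ) : FiniteDimensional k (Form k m) :=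
  Module.Finite.iff_fg.2 (homogeneousSubmodule_fg (Fin 2) k m)

/-! ### The multiplication map and its surjectivity -/

/-- The map `(A, L) ↦ A * G + ∑ L i * F i`, as a linear map in `(A, L)` depending linearly on
`(G, F)`. -/
def mulMap (k : Type*) [Field k] {N p a b m : ℕ} (h₁ : p + a = m) (h₂ : 1 + b = m) :
    (Form k a × (Fin N → Form k b)) →ₗ[k] (Form k p × (Fin N → Form k 1)) →ₗ[k] Form k m :=
  LinearMap.mk₂ k (fun GF AL => mulForm h₁ AL.1 GF.1 + ∑ i, mulForm h₂ (AL.2 i) (GF.2 i))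
    (fun x y z => Subtype.ext (by
      simp [mulForm, mul_add, Finset.sum_add_distrib]; ring))
    (fun c x z => Subtype.ext (by
      simp [mulForm, Finset.smul_sum]))
    (fun x y z => Subtype.ext (by
      simp [mulForm, add_mul, Finset.sum_add_distrib]; ring))
    (fun c x z => Subtype.ext (by
      simp [mulForm, Finset.smul_sum]))

lemma mulMap_apply {k : Type*} [Field k] {N p a b m : ℕ} (h₁ : p + a = m) (h₂ : 1 + b = m)
    (GF : Form k a × (Fin N → Form k b)) (AL : Form k p × (Fin N → Form k 1)) :
    mulMap k h₁ h₂ GF AL = mulForm h₁ AL.1 GF.1 + ∑ i, mulForm h₂ (AL.2 i) (GF.2 i) := rfl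

/-- A combinatorial criterion for surjectivity: the exponents `r, …, r + p` coming from `G` and the
pairs `c, c + 1` coming from the `F i` cover all of `0, …, m`. -/
lemma mulMap_surjective {k : Type*} [Field k] {N p a b m : ℕ} (h₁ : p + a = m) (h₂ : 1 + b = m)
    (GF : Form k a × (Fin N → Form k b)) (r : ℕ) (hr : HasOrd GF.1 r)
    (h : ∀ l ≤ m, (r ≤ l ∧ l ≤ r + p) ∨ ∃ i c, HasOrd (GF.2 i) c ∧ (l = c ∨ l = c + 1)) :
    Function.Surjective (mulMap k h₁ h₂ GF) := by
  rw [← LinearMap.range_eq_top]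
  refine eq_top_of_hasOrd _ fun l hl => ?_
  rcases h l hl with ⟨h3, h4⟩ | ⟨i, c, hc, hlc⟩
  · refine ⟨_, ⟨(monoForm k p (l - r) (by omega), 0), rfl⟩, ?_⟩
    have := hr.mul h₁ (i := l - r) (by omega)
    rw [Nat.sub_add_cancel h3] at this
    convert this using 1
    rw [mulMap_apply]
    refine Subtype.ext ?_
    simp [mulForm]
  · have key : ∀ j, (hj : j ≤ 1) → ∃ u ∈ LinearMap.range (mulMap k h₁ h₂ GF), HasOrd u (j + c) := by
      intro j hj
      refine ⟨_, ⟨(0, Pi.single i (monoForm k 1 j hj)), rfl⟩, ?_⟩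
      convert hc.mul h₂ hj using 1
      rw [mulMap_apply]
      refine Subtype.ext ?_
      simp only [mulForm, Submodule.coe_add, Submodule.coe_sum, ZeroMemClass.coe_zero, zero_mul,
        zero_add]
      rw [Finset.sum_eq_single i]
      · simp
      · intro x _ hx; simp [hx]
      · simp
    rcases hlc with rfl | rfl
    · simpa using key 0 (by omega)
    · simpa [add_comm] using key 1 le_rfl

/-- For every `G ≠ 0` suitable monomials `F i` make the map surjective. -/
lemma exists_surjective {k : Type*} [Field k] {N d m a b : ℕ} (hd : 3 ≤ d) (hN : d - 1 ≤ N)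
    (ha : a = 2 * d - 4) (hb : b = 2 * d - 2)
    (h₁ : 3 + a = m) (h₂ : 1 + b = m) (G : Form k a) (hG : G ≠ 0) :
    ∃ F : Fin N → Form k b, Function.Surjective (mulMap k h₁ h₂ (G, F)) := by
  obtain ⟨r, hr⟩ := exists_hasOrd G hG
  have hrm := hr.1
  -- The pairs `2 * i, 2 * i + 1` fill the exponents below `r`, and the pairs `2 * i + 2, 2 * i + 3`
  -- those above `r + 3`, whatever the parity of `r`; the `min` only matters for superfluous `i`.
  refine ⟨fun i => monoForm k b (min (if 2 * i.1 < r then 2 * i.1 else 2 * i.1 + 2) b)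
    (min_le_right _ _), mulMap_surjective h₁ h₂ _ r hr fun l hl => ?_⟩
  by_cases h3 : r ≤ l ∧ l ≤ r + 3
  · exact Or.inl h3
  · right
    by_cases hlr : l < r
    · refine ⟨⟨l / 2, by omega⟩, _, hasOrd_monoForm _ _ _ (min_le_right _ _), ?_⟩
      dsimp only
      split_ifs <;> omega
    · refine ⟨⟨(l - 2) / 2, by omega⟩, _, hasOrd_monoForm _ _ _ (min_le_right _ _), ?_⟩
      dsimp only
      split_ifs <;> omega

/-- The map can be surjective even when one of the forms `F i` vanishes. -/
lemma exists_surjective_of_index {k : Type*} [Field k] {N d m a b : ℕ} (hd : 3 ≤ d)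
    (hN : d - 1 ≤ N) (hb : b = 2 * d - 2)
    (h₁ : 3 + a = m) (h₂ : 1 + b = m) (i₀ : Fin N) :
    ∃ GF : Form k a × (Fin N → Form k b), GF.2 i₀ = 0 ∧
      Function.Surjective (mulMap k h₁ h₂ GF) := by
  -- `G` is a power of `t` and fills `0, …, 3`; the `F i` with `i ≠ i₀` fill the rest in order.
  refine ⟨(monoForm k a 0 (Nat.zero_le _), fun i => if i = i₀ then 0 else
    monoForm k b (min (if i < i₀ then 2 * i.1 + 4 else 2 * i.1 + 2) b) (min_le_right _ _)),
    by simp, mulMap_surjective h₁ h₂ _ 0 (hasOrd_monoForm _ _ _ (Nat.zero_le _)) fun l hl => ?_⟩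
  by_cases h3 : l ≤ 3
  · left; omega
  · right
    by_cases hli : (l - 4) / 2 < i₀.1
    · refine ⟨⟨(l - 4) / 2, by omega⟩,
        min (if (l - 4) / 2 < i₀.1 then 2 * ((l - 4) / 2) + 4 else 2 * ((l - 4) / 2) + 2) b, ?_, ?_⟩
      · dsimp only
        rw [if_neg (by rw [Fin.ext_iff]; exact hli.ne)]
        exact hasOrd_monoForm _ _ _ (min_le_right _ _)
      · rw [if_pos hli]; omega
    · refine ⟨⟨(l - 4) / 2 + 1, by omega⟩, min (if (l - 4) / 2 + 1 < i₀.1 then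
        2 * ((l - 4) / 2 + 1) + 4 else 2 * ((l - 4) / 2 + 1) + 2) b, ?_, ?_⟩
      · dsimp only
        rw [if_neg (by rw [Fin.ext_iff]; dsimp only; omega)]
        exact hasOrd_monoForm _ _ _ (min_le_right _ _)
      · rw [if_neg (by omega)]; omega

/-! ### The locus of non-surjectivity contains no hypersurface -/

lemma surjective_of_det_ne_zero {k V W : Type*} [Field k] [AddCommGroup V] [Module k V]
    [AddCommGroup W] [Module k W] [FiniteDimensional k W] (T : V →ₗ[k] W) (B : W →ₗ[k] V)
    (h : LinearMap.det (T ∘ₗ B) ≠ 0) : Function.Surjective T := by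
  have : Function.Surjective (T ∘ₗ B) := (LinearMap.equivOfDetNeZero _ h).surjective
  rw [LinearMap.coe_comp] at this
  exact this.of_comp

/-- The projection of the space of tuples `(G, F)` replacing `F i` by zero. -/
def dropForm (k : Type*) [Field k] {N a b : ℕ} (i : Fin N) :
    (Form k a × (Fin N → Form k b)) →ₗ[k] (Form k a × (Fin N → Form k b)) :=
  LinearMap.id - LinearMap.inr k _ _ ∘ₗ LinearMap.single k _ i ∘ₗ LinearMap.proj i ∘ₗ
    LinearMap.snd k _ _

lemma dropForm_apply {k : Type*} [Field k] {N a b : ℕ} (i : Fin N)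
    (z : Form k a × (Fin N → Form k b)) : dropForm k i z = z - (0, Pi.single i (z.2 i)) := rfl

/-- If the map is surjective after replacing `F i` by zero, then it is surjective for every value of
`F i`. -/
lemma surjective_of_dropForm {k : Type*} [Field k] {N p a b m : ℕ} (h₁ : p + a = m)
    (h₂ : 1 + b = m) (i : Fin N) (z : Form k a × (Fin N → Form k b)) (w : Form k b)
    (h : Function.Surjective (mulMap k h₁ h₂ (dropForm k i z))) :
    Function.Surjective (mulMap k h₁ h₂ (z + (0, Pi.single i w))) := by
  intro y
  obtain ⟨AL, rfl⟩ := h y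
  refine ⟨(AL.1, Function.update AL.2 i 0), ?_⟩
  rw [mulMap_apply, mulMap_apply, dropForm_apply]
  congr 1
  · simp
  · refine Finset.sum_congr rfl fun j _ => Subtype.ext ?_
    by_cases hj : j = i
    · subst hj; simp [mulForm]
    · simp [mulForm, hj]

/-- A polynomial whose zeros all lie in the locus where the map fails to be surjective is
not prime: that locus contains no hypersurface. -/
lemma not_prime_of_zeros {k : Type*} [Field k] [IsAlgClosed k] {N d m a b M : ℕ} (hd : 3 ≤ d)
    (hN : d - 1 ≤ N) (ha : a = 2 * d - 4) (hb : b = 2 * d - 2)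
    (h₁ : 3 + a = m) (h₂ : 1 + b = m)
    (e : (Form k a × (Fin N → Form k b)) ≃ₗ[k] (Fin M → k))
    (f : MvPolynomial (Fin M) k)
    (hf : ∀ z, Function.Surjective (mulMap k h₁ h₂ z) → eval (e z) f ≠ 0) : ¬ Prime f := by
  intro hfp
  have hinf : Infinite k := IsAlgClosed.instInfinite
  -- `f` is invariant under translations in the direction of each `F i`: the dense set used is
  -- `D ≠ 0`, on which the map is surjective even without `F i`.
  have inv1 : ∀ i w x, eval (x + e (0, Pi.single i w)) f = eval x f := by
    intro i w x
    obtain ⟨z₀, hz₀, hsurj⟩ := exists_surjective_of_index (k := k) hd hN hb h₁ h₂ i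
    obtain ⟨B, hB⟩ := LinearMap.exists_rightInverse_of_surjective _
      (LinearMap.range_eq_top.2 hsurj)
    obtain ⟨D, hD⟩ := exists_poly_det
      (LinearMap.lcomp k _ B ∘ₗ mulMap k h₁ h₂ ∘ₗ dropForm k i ∘ₗ e.symm.toLinearMap)
    refine eval_add_eq_of_dense f D ?_ _ ?_ x
    · rintro rfl
      have h0 := hD (e z₀)
      have h1 : dropForm k i z₀ = z₀ := by
        rw [dropForm_apply, hz₀, Pi.single_zero]
        exact sub_zero _
      have h2 : (LinearMap.lcomp k _ B ∘ₗ mulMap k h₁ h₂ ∘ₗ dropForm k i ∘ₗ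
          e.symm.toLinearMap) (e z₀) = LinearMap.id := by
        simp only [LinearMap.comp_apply, LinearEquiv.coe_coe, LinearEquiv.symm_apply_apply, h1]
        exact hB
      rw [h2, LinearMap.det_id, map_zero] at h0
      exact zero_ne_one h0
    · intro y hy
      rw [hD] at hy
      have hs := surjective_of_det_ne_zero (mulMap k h₁ h₂ (dropForm k i (e.symm y))) B hy
      refine eval_line_const f y _ fun c => ?_
      have := hf _ (surjective_of_dropForm h₁ h₂ i (e.symm y) (c • w) hs)
      convert this using 2
      rw [map_add, LinearEquiv.apply_symm_apply, ← map_smul]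
      congr 2
      rw [Prod.smul_mk, smul_zero, Pi.single_smul]
  have inv : ∀ G F, eval (e (G, F)) f = eval (e (G, 0)) f := by
    intro G F
    have key : ∀ s : Finset (Fin N),
        eval (e (G, ∑ i ∈ s, Pi.single i (F i))) f = eval (e (G, 0)) f := by
      intro s
      induction s using Finset.induction_on with
      | empty => simp
      | insert i s his ih =>
        rw [Finset.sum_insert his, ← ih, ← inv1 i (F i) (e (G, ∑ i ∈ s, Pi.single i (F i))),
          ← map_add]
        congr 2
        rw [Prod.mk_add_mk, add_zero, add_comm]
    have := key Finset.univ
    rwa [Finset.univ_sum_single] at this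
  have hne : ∀ G : Form k a, G ≠ 0 → eval (e (G, 0)) f ≠ 0 := by
    intro G hG
    obtain ⟨F, hF⟩ := exists_surjective hd hN ha hb h₁ h₂ G hG
    rw [← inv G F]
    exact hf _ hF
  obtain ⟨x, hx⟩ := exists_eval_eq_zero f hfp
  have hx0 : eval (e (0, 0)) f = 0 := by
    by_contra h0
    refine absurd hx ?_
    rw [← e.apply_symm_apply x]
    obtain ⟨G, F⟩ := e.symm x
    rw [inv]
    by_cases hG : G = 0
    · rwa [hG]
    · exact hne G hG
  -- For `c ≠ 0` the line `c • G₂ + c' • G₁` avoids `0`, so `f` is constant on it; letting `c` tend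
  -- to `0` gives `f (G₁, 0) = f (0, 0) = 0`.
  let G₁ := monoForm k a 0 (Nat.zero_le _)
  let G₂ := monoForm k a 1 (by omega)
  have hG₁ : G₁ ≠ 0 := fun h => by
    have := (hasOrd_monoForm k a 0 (Nat.zero_le _)).2.1
    change cf 0 G₁ ≠ 0 at this
    rw [h] at this
    exact this (by simp [cf])
  have hG₁₂ : ∀ c c' : k, c ≠ 0 → c • G₂ + c' • G₁ ≠ 0 := by
    intro c c' hc h
    have h1 : cf 1 (c • G₂ + c' • G₁) = c := by
      simp only [cf, G₁, G₂, monoForm, Submodule.coe_add, Submodule.coe_smul, coeff_add,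
        coeff_smul, coeff_monomial, if_true, smul_eq_mul, mul_one]
      rw [if_neg (fun h => absurd (expo_inj h).1 (by norm_num))]
      simp
    rw [h] at h1
    exact hc (h1.symm.trans (by simp [cf]))
  refine hne G₁ hG₁ ?_
  rw [← hx0]
  refine eval_line_of_ne_zero f _ (e (G₂, 0)) _ (e (G₂, 0)) fun c hc => ?_
  have key := eval_line_const f (e (c • G₂, 0)) (e (G₁, 0)) fun c' => by
    rw [← map_smul, ← map_add]
    have := hne _ (hG₁₂ c c' hc)
    simpa using this
  rw [← map_smul, ← map_add, ← map_add]
  rw [← map_add] at key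
  simpa [add_comm] using key

/-- Let `k` be an algebraically closed field of characteristic zero,
`n ≥ 4`, `3 ≤ d ≤ n − 1`, and `W_m` the space of binary forms of degree `m` in
`s = X 0`, `t = X 1`.  Let `Z ⊆ W_{2d−4} × (W_{2d−2})^{n−2}` be the set of tuples
`(G, F_3, …, F_n)` for which the linear map `W_3 × W_1^{n−2} → W_{2d−1}`,
`(A, L_3, …, L_n) ↦ A·G + ∑ L_i·F_i`, is not surjective.  Then, identifying the
ambient affine space with `k^M` where `M = (2d−3) + (n−2)(2d−1)` via any
`k`-linear isomorphism `e`, the image of `Z` is Zariski closed (a common zero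
locus of polynomials) and has codimension at least 2: the Krull dimension of the
quotient of the polynomial ring in `M` variables by the vanishing ideal of
`e '' Z` is at most `M − 2`. -/
theorem stmt4 {k : Type*} [Field k] [IsAlgClosed k] [CharZero k]
    (n d : ℕ) (hn : 4 ≤ n) (hd : 3 ≤ d) (hdn : d ≤ n - 1)
    (Z : Set ((homogeneousSubmodule (Fin 2) k (2 * d - 4)) ×
      (Fin (n - 2) → (homogeneousSubmodule (Fin 2) k (2 * d - 2)))))
    (hZ : Z = {GF | ¬ Function.Surjective
      (fun AL : (homogeneousSubmodule (Fin 2) k 3) ×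
          (Fin (n - 2) → (homogeneousSubmodule (Fin 2) k 1)) =>
        mulForm (show 3 + (2 * d - 4) = 2 * d - 1 by omega) AL.1 GF.1 +
          ∑ i : Fin (n - 2),
            mulForm (show 1 + (2 * d - 2) = 2 * d - 1 by omega) (AL.2 i) (GF.2 i))})
    (M : ℕ) (hM : M = (2 * d - 3) + (n - 2) * (2 * d - 1))
    (e : ((homogeneousSubmodule (Fin 2) k (2 * d - 4)) ×
        (Fin (n - 2) → (homogeneousSubmodule (Fin 2) k (2 * d - 2)))) ≃ₗ[k]
      (Fin M → k)) :
    (∃ P : Set (MvPolynomial (Fin M) k),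
        e '' Z = {x | ∀ f ∈ P, MvPolynomial.eval x f = 0}) ∧
      ∀ I : Ideal (MvPolynomial (Fin M) k),
        (∀ f, f ∈ I ↔ ∀ x ∈ e '' Z, MvPolynomial.eval x f = 0) →
          ringKrullDim (MvPolynomial (Fin M) k ⧸ I) ≤ ((M - 2 : ℕ) : WithBot ℕ∞) := by
  have hT : ∀ z, z ∈ Z ↔ ¬ Function.Surjective
      (mulMap k (show 3 + (2 * d - 4) = 2 * d - 1 by omega)
        (show 1 + (2 * d - 2) = 2 * d - 1 by omega) z) := fun z => by
    rw [hZ]; rfl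
  let T := mulMap k (N := n - 2) (show 3 + (2 * d - 4) = 2 * d - 1 by omega)
    (show 1 + (2 * d - 2) = 2 * d - 1 by omega)
  choose D hD using fun B => exists_poly_det (LinearMap.lcomp k _ B ∘ₗ T ∘ₗ e.symm.toLinearMap)
  have hDe : ∀ B z, eval (e z) (D B) = LinearMap.det (T z ∘ₗ B) := fun B z => by
    rw [hD]
    simp only [LinearMap.comp_apply, LinearEquiv.coe_coe, LinearEquiv.symm_apply_apply]
    rfl
  have hzero : ∀ z, z ∈ Z ↔ ∀ B, eval (e z) (D B) = 0 := by
    intro z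
    rw [hT]
    refine ⟨fun h B => ?_, fun h hs => ?_⟩
    · by_contra hne
      rw [hDe] at hne
      exact h (surjective_of_det_ne_zero _ B hne)
    · obtain ⟨B, hB⟩ := LinearMap.exists_rightInverse_of_surjective (T z)
        (LinearMap.range_eq_top.2 hs)
      have := h B
      rw [hDe, hB, LinearMap.det_id] at this
      exact one_ne_zero this
  refine ⟨⟨Set.range D, ?_⟩, fun I hI => ?_⟩
  · ext x
    obtain ⟨z, rfl⟩ := e.surjective x
    rw [e.injective.mem_set_image, hzero]
    simp
  · refine ringKrullDim_quotient_le_of_forall_prime ?_ I fun f hfp => ?_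
    · have : 2 * 5 ≤ (n - 2) * (2 * d - 1) := Nat.mul_le_mul (by omega) (by omega)
      omega
    · by_contra! hall
      refine not_prime_of_zeros hd (by omega) rfl rfl
        (show 3 + (2 * d - 4) = 2 * d - 1 by omega) (show 1 + (2 * d - 2) = 2 * d - 1 by omega) e f
        (fun z hs h0 => ?_) hfp
      refine (hT z).1 ((hzero z).2 fun B => ?_) hs
      obtain ⟨q, hq⟩ := hall (D B) ((hI _).2 (by
        rintro _ ⟨y, hy, rfl⟩
        exact (hzero y).1 hy B))
      rw [hq, map_mul, h0, zero_mul]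
end
end
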